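/- Equivalence of the small-step and big-step semantics of λ_SEC: for every ascription-free and stamping-free λ_SEC term t and every value v, t ⇓ v in the big-step semantics if and only if t ↦* v, where ↦* is the reflexive–transitive closure of the small-step reduction relation. -/

import Mathlib

/-!
Left to right is an induction on the big-step derivation: each premise yields a reduction sequence
that is replayed inside an evaluation frame, and the label joined to the result by the big-step rule
is produced by the final `stamp` redex.

For the converse, intermediate small-step terms contain stamps, on which `Big` is undefined. The
relation `BigStamp` adds the evident rule for `t ⊔ ℓ` and is closed under small-step expansion
(`BigStamp.of_step`), so `t ↦* v` gives `BigStamp t v`. On stamp-free terms the additional rule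
never fires, because evaluation and substitution preserve stamp-freeness; hence `BigStamp` coincides
with `Big` there (`BigStamp.to_big`).
-/

/-- Static security types: S ::= Bool_ℓ | S →_ℓ S. -/
inductive SType (L : Type) where
  | bool (l : L)
  | arrow (S1 : SType L) (l : L) (S2 : SType L)

variable {L : Type} [Lattice L] [BoundedOrder L]

/-- Static subtyping. -/
inductive SSub : SType L → SType L → Prop where
  | bool {l l' : L} : l ≤ l' → SSub (.bool l) (.bool l')
  | arrow {S1 S1' S2 S2' : SType L} {l l' : L} :
      SSub S1' S1 → SSub S2 S2' → l ≤ l' →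
      SSub (.arrow S1 l S2) (.arrow S1' l' S2')

/-- Label stamping on static types. -/
def SType.stamp : SType L → L → SType L
  | .bool l, l' => .bool (l ⊔ l')
  | .arrow S1 l S2, l' => .arrow S1 (l ⊔ l') S2

mutual
/-- Partial subtyping join ⋎. -/
def sjoin : SType L → SType L → Option (SType L)
  | .bool l, .bool l' => some (.bool (l ⊔ l'))
  | .arrow S11 l S12, .arrow S21 l' S22 => do
      let m ← smeet S11 S21
      let j ← sjoin S12 S22
      pure (.arrow m (l ⊔ l') j)
  | _, _ => none
/-- Partial subtyping meet ⋏. -/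
def smeet : SType L → SType L → Option (SType L)
  | .bool l, .bool l' => some (.bool (l ⊓ l'))
  | .arrow S11 l S12, .arrow S21 l' S22 => do
      let j ← sjoin S11 S21
      let m ← smeet S12 S22
      pure (.arrow j (l ⊓ l') m)
  | _, _ => none
end
/-- λ_SEC terms, extended with the term-stamping form `t ⊔ ℓ` used by the
small-step semantics. -/
inductive Tm (L : Type) where
  | var (x : String)
  | bool (b : Bool) (l : L)
  | lam (x : String) (S : SType L) (t : Tm L) (l : L)
  | app (t1 t2 : Tm L)
  | binop (op : Bool → Bool → Bool) (t1 t2 : Tm L)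
  | ite (t1 t2 t3 : Tm L)
  | stamp (t : Tm L) (l : L)

/-- Values are labeled raw values r_ℓ. -/
inductive IsValue : Tm L → Prop where
  | bool {b l} : IsValue (.bool b l)
  | lam {x S t l} : IsValue (.lam x S t l)

/-- `relabel r_ℓ₁ ℓ₂ = r_(ℓ₁ ⊔ ℓ₂)` on values. -/
def relabel : Tm L → L → Tm L
  | .bool b l, l' => .bool b (l ⊔ l')
  | .lam x S t l, l' => .lam x S t (l ⊔ l')
  | t, _ => t

/-- Substitution [s/x]t. -/
def subst (x : String) (s : Tm L) : Tm L → Tm L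
  | .var y => if y = x then s else .var y
  | .bool b l => .bool b l
  | .lam y S t l => if y = x then .lam y S t l else .lam y S (subst x s t) l
  | .app t1 t2 => .app (subst x s t1) (subst x s t2)
  | .binop op t1 t2 => .binop op (subst x s t1) (subst x s t2)
  | .ite t1 t2 t3 => .ite (subst x s t1) (subst x s t2) (subst x s t3)
  | .stamp t l => .stamp (subst x s t) l

/-- Source terms contain no term-stamping form. -/
def StampFree : Tm L → Prop
  | .var _ => True
  | .bool _ _ => True
  | .lam _ _ t _ => StampFree t
  | .app t1 t2 => StampFree t1 ∧ StampFree t2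
  | .binop _ t1 t2 => StampFree t1 ∧ StampFree t2
  | .ite t1 t2 t3 => StampFree t1 ∧ StampFree t2 ∧ StampFree t3
  | .stamp _ _ => False

/-- Zdancewic's big-step (natural) semantics t ⇓ v. -/
inductive Big : Tm L → Tm L → Prop where
  | val {v} : IsValue v → Big v v
  | binop {op t1 t2 b1 l1 b2 l2} :
      Big t1 (.bool b1 l1) → Big t2 (.bool b2 l2) →
      Big (.binop op t1 t2) (.bool (op b1 b2) (l1 ⊔ l2))
  | app {t1 t2 x S tb l v w} :
      Big t1 (.lam x S tb l) → Big t2 v → Big (subst x v tb) w →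
      Big (.app t1 t2) (relabel w l)
  | iteT {t1 t2 t3 l w} :
      Big t1 (.bool true l) → Big t2 w → Big (.ite t1 t2 t3) (relabel w l)
  | iteF {t1 t2 t3 l w} :
      Big t1 (.bool false l) → Big t3 w → Big (.ite t1 t2 t3) (relabel w l)

/-- Small-step reduction t ↦ t': the notions of reduction closed under the
evaluation frames [] ⊕ t, v ⊕ [], [] t, v [], if [] then t else t, [] ⊔ ℓ. -/
inductive Step : Tm L → Tm L → Prop where
  | binop {op b1 l1 b2 l2} :
      Step (.binop op (.bool b1 l1) (.bool b2 l2)) (.bool (op b1 b2) (l1 ⊔ l2))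
  | app {x S tb l v} : IsValue v →
      Step (.app (.lam x S tb l) v) (.stamp (subst x v tb) l)
  | iteT {l t1 t2} : Step (.ite (.bool true l) t1 t2) (.stamp t1 l)
  | iteF {l t1 t2} : Step (.ite (.bool false l) t1 t2) (.stamp t2 l)
  | stampv {u l} : IsValue u → Step (.stamp u l) (relabel u l)
  | cop1 {op t1 t1' t2} : Step t1 t1' → Step (.binop op t1 t2) (.binop op t1' t2)
  | cop2 {op v t2 t2'} : IsValue v → Step t2 t2' → Step (.binop op v t2) (.binop op v t2')
  | capp1 {t1 t1' t2} : Step t1 t1' → Step (.app t1 t2) (.app t1' t2)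
  | capp2 {v t2 t2'} : IsValue v → Step t2 t2' → Step (.app v t2) (.app v t2')
  | cite {t1 t1' t2 t3} : Step t1 t1' → Step (.ite t1 t2 t3) (.ite t1' t2 t3)
  | cstamp {t t' l} : Step t t' → Step (.stamp t l) (.stamp t' l)

/-- The big-step semantics extended to terms with stamps: if `t ⇓ r_ℓ'` then
`t ⊔ ℓ ⇓ r_(ℓ' ⊔ ℓ)`. -/
inductive BigStamp : Tm L → Tm L → Prop where
  | val {v} : IsValue v → BigStamp v v
  | binop {op t1 t2 b1 l1 b2 l2} :
      BigStamp t1 (.bool b1 l1) → BigStamp t2 (.bool b2 l2) →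
      BigStamp (.binop op t1 t2) (.bool (op b1 b2) (l1 ⊔ l2))
  | app {t1 t2 x S tb l v w} :
      BigStamp t1 (.lam x S tb l) → BigStamp t2 v → BigStamp (subst x v tb) w →
      BigStamp (.app t1 t2) (relabel w l)
  | iteT {t1 t2 t3 l w} :
      BigStamp t1 (.bool true l) → BigStamp t2 w → BigStamp (.ite t1 t2 t3) (relabel w l)
  | iteF {t1 t2 t3 l w} :
      BigStamp t1 (.bool false l) → BigStamp t3 w → BigStamp (.ite t1 t2 t3) (relabel w l)
  | stamp {t l w} : BigStamp t w → BigStamp (.stamp t l) (relabel w l)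

theorem IsValue.relabel {v : Tm L} (hv : IsValue v) (l : L) : IsValue (relabel v l) := by
  cases hv <;> constructor

theorem Big.isValue {t v : Tm L} (h : Big t v) : IsValue v := by
  induction h with
  | val h => exact h
  | binop => exact .bool
  | app _ _ _ _ _ ih => exact ih.relabel _
  | iteT _ _ _ ih => exact ih.relabel _
  | iteF _ _ _ ih => exact ih.relabel _

theorem BigStamp.eq_of_isValue {v w : Tm L} (hv : IsValue v) (h : BigStamp v w) : w = v := by
  cases hv <;> cases h <;> rfl

/-- `BigStamp` is closed under small-step expansion. -/
theorem BigStamp.of_step {t t' v : Tm L} (hs : Step t t') (h : BigStamp t' v) :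
    BigStamp t v := by
  induction hs generalizing v with
  | binop =>
    obtain rfl := h.eq_of_isValue .bool
    exact .binop (.val .bool) (.val .bool)
  | app hv =>
    cases h with
    | val h => cases h
    | stamp h => exact .app (.val .lam) (.val hv) h
  | iteT =>
    cases h with
    | val h => cases h
    | stamp h => exact .iteT (.val .bool) h
  | iteF =>
    cases h with
    | val h => cases h
    | stamp h => exact .iteF (.val .bool) h
  | stampv hu =>
    obtain rfl := h.eq_of_isValue (hu.relabel _)
    exact .stamp (.val hu)
  | cop1 _ ih =>
    cases h with
    | val h => cases h
    | binop h1 h2 => exact .binop (ih h1) h2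
  | cop2 _ _ ih =>
    cases h with
    | val h => cases h
    | binop h1 h2 => exact .binop h1 (ih h2)
  | capp1 _ ih =>
    cases h with
    | val h => cases h
    | app h1 h2 h3 => exact .app (ih h1) h2 h3
  | capp2 _ _ ih =>
    cases h with
    | val h => cases h
    | app h1 h2 h3 => exact .app h1 (ih h2) h3
  | cite _ ih =>
    cases h with
    | val h => cases h
    | iteT h1 h2 => exact .iteT (ih h1) h2
    | iteF h1 h2 => exact .iteF (ih h1) h2
  | cstamp _ ih =>
    cases h with
    | val h => cases h
    | stamp h => exact .stamp (ih h)

theorem StampFree.subst {x : String} {s t : Tm L} (hs : StampFree s) (ht : StampFree t) :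
    StampFree (subst x s t) := by
  induction t with
  | var y =>
    unfold _root_.subst
    split
    · exact hs
    · trivial
  | bool => trivial
  | lam y S t l ih =>
    unfold _root_.subst
    split
    · exact ht
    · exact ih ht
  | app _ _ ih1 ih2 => exact ⟨ih1 ht.1, ih2 ht.2⟩
  | binop _ _ _ ih1 ih2 => exact ⟨ih1 ht.1, ih2 ht.2⟩
  | ite _ _ _ ih1 ih2 ih3 => exact ⟨ih1 ht.1, ih2 ht.2.1, ih3 ht.2.2⟩
  | stamp => exact ht.elim

theorem StampFree.relabel {t : Tm L} (ht : StampFree t) (l : L) : StampFree (relabel t l) := by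
  cases t <;> exact ht

/-- On stamp-free terms `BigStamp` agrees with `Big`. Stamp-freeness of the result is carried along
because the `app` rule substitutes results into the body of a function that is itself a result. -/
theorem BigStamp.to_big {t v : Tm L} (h : BigStamp t v) (ht : StampFree t) :
    Big t v ∧ StampFree v := by
  induction h with
  | val hv => exact ⟨.val hv, ht⟩
  | binop _ _ ih1 ih2 => exact ⟨.binop (ih1 ht.1).1 (ih2 ht.2).1, trivial⟩
  | app _ _ _ ih1 ih2 ih3 =>
    obtain ⟨h1, hb⟩ := ih1 ht.1
    obtain ⟨h2, hv⟩ := ih2 ht.2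
    obtain ⟨h3, hw⟩ := ih3 (hv.subst hb)
    exact ⟨.app h1 h2 h3, hw.relabel _⟩
  | iteT _ _ ih1 ih2 =>
    obtain ⟨h2, hw⟩ := ih2 ht.2.1
    exact ⟨.iteT (ih1 ht.1).1 h2, hw.relabel _⟩
  | iteF _ _ ih1 ih2 =>
    obtain ⟨h2, hw⟩ := ih2 ht.2.2
    exact ⟨.iteF (ih1 ht.1).1 h2, hw.relabel _⟩
  | stamp => exact ht.elim

open Relation in
theorem Big.to_steps {t v : Tm L} (h : Big t v) : ReflTransGen Step t v := by
  induction h with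
  | val => exact .refl
  | @binop op t1 t2 b1 l1 b2 l2 _ _ ih1 ih2 =>
    exact ((ih1.lift (Tm.binop op · t2) fun _ _ => Step.cop1).trans
      (ih2.lift (Tm.binop op (.bool b1 l1)) fun _ _ => Step.cop2 .bool)).tail .binop
  | @app t1 t2 x S tb l v w _ h2 h3 ih1 ih2 ih3 =>
    exact ((((ih1.lift (Tm.app · t2) fun _ _ => Step.capp1).trans
      (ih2.lift (Tm.app (.lam x S tb l)) fun _ _ => Step.capp2 .lam)).tail (.app h2.isValue)).trans
      (ih3.lift (Tm.stamp · l) fun _ _ => Step.cstamp)).tail (.stampv h3.isValue)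
  | @iteT t1 t2 t3 l w _ h2 ih1 ih2 =>
    exact (((ih1.lift (Tm.ite · t2 t3) fun _ _ => Step.cite).tail .iteT).trans
      (ih2.lift (Tm.stamp · l) fun _ _ => Step.cstamp)).tail (.stampv h2.isValue)
  | @iteF t1 t2 t3 l w _ h2 ih1 ih2 =>
    exact (((ih1.lift (Tm.ite · t2 t3) fun _ _ => Step.cite).tail .iteF).trans
      (ih2.lift (Tm.stamp · l) fun _ _ => Step.cstamp)).tail (.stampv h2.isValue)

/-- equivalence of big-step and small-step semantics of λ_SEC. -/
theorem bigstep_iff_smallstep {L : Type} [Lattice L] [BoundedOrder L]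
    (t v : Tm L) (ht : StampFree t) (hv : IsValue v) :
    Big t v ↔ Relation.ReflTransGen Step t v := by
  refine ⟨Big.to_steps, fun h => (BigStamp.to_big ?_ ht).1⟩
  clear ht
  induction h using Relation.ReflTransGen.head_induction_on with
  | refl => exact .val hv
  | head hs _ ih => exact ih.of_step hs
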